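/- Let m ≥ 1 be a real number, let k : [0,∞) → (0,∞) be continuous, nondecreasing, with k(r) → +∞ as r → +∞, and let g ∈ C²([0,∞)) solve g''(r) = k(r)² g(r), g(0) = 0, g'(0) = 1. Then liminf_{r→∞} ( k(r) ∫₀^r g(t)^m dt ) / g(r)^m ≥ 1/m. -/

import Mathlib

open Set Filter MeasureTheory intervalIntegral

/-!
Two facts are needed: `F r = k r * (∫₀^r g^m) / g r ^ m` is eventually at least `1 / (m c²)` for
every `c > 1`, and `F` does not tend to infinity. The second one matters because a real-valued
`liminf` of a function tending to `+∞` has the junk value `0`.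

* Positivity: `(g g')' = g'² + k² g² ≥ 0`, so `g²` is nondecreasing and `g` never returns to `0`.
  Hence `g > 0` on `(0, ∞)`, then `g' ≥ 1` and `g r ≥ r`.
* Lower bound: for fixed `r`, monotonicity of `k` makes `g'² - k(r)² g²` nonincreasing on `[0, r]`,
  so `g'(r)² ≤ k(r)² g(r)² + 1`, and `g' ≤ c k g` eventually. Hence
  `m c k(r) ∫₀^t g^m - g(t)^m` is nondecreasing for large `t ≤ r`, which gives the bound
  up to the ratio `g(R)^m / g(r)^m → 0`.
* Upper bound along a sequence: with `w = g'/g` and `v = g^m / ∫₀^r g^m` one has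
  `w' = k² - w²` and `v' = v (m w - v)`. If `F > 3` eventually, i.e. `k > 3 v`, then
  `L = log (w v²)` satisfies `L' ≥ (w + 2 v) / 2 ≥ exp (L / 3) / 2`, so the positive function
  `exp (-L / 3)` decreases at rate at least `1/6`, which is impossible on a half-line.
-/

namespace LiminfBound

section

variable {k g g' g'' : ℝ → ℝ}

lemma hasDerivAt_of_Ici {f f' : ℝ → ℝ}
    (h : ∀ r : ℝ, 0 ≤ r → HasDerivWithinAt f (f' r) (Set.Ici 0) r) {r : ℝ} (hr : 0 < r) :
    HasDerivAt f (f' r) r :=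
  (h r hr.le).hasDerivAt (Ici_mem_nhds hr)

lemma continuousOn_of_Ici {f f' : ℝ → ℝ}
    (h : ∀ r : ℝ, 0 ≤ r → HasDerivWithinAt f (f' r) (Set.Ici 0) r) :
    ContinuousOn f (Ici 0) :=
  fun r hr => (h r hr).continuousWithinAt

lemma monotoneOn_Ici_of_deriv {f f' : ℝ → ℝ} {a : ℝ} (hc : ContinuousOn f (Ici a))
    (hd : ∀ t, a < t → HasDerivAt f (f' t) t) (hn : ∀ t, a < t → 0 ≤ f' t) :
    MonotoneOn f (Ici a) := by
  refine monotoneOn_of_hasDerivWithinAt_nonneg (f' := f') (convex_Ici a) hc ?_ ?_ <;>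
    rw [interior_Ici]
  · exact fun t ht => (hd t ht).hasDerivWithinAt
  · exact hn

lemma monotoneOn_Icc_of_deriv {f f' : ℝ → ℝ} {a b : ℝ} (hc : ContinuousOn f (Icc a b))
    (hd : ∀ t, a < t → t < b → HasDerivAt f (f' t) t)
    (hn : ∀ t, a < t → t < b → 0 ≤ f' t) :
    MonotoneOn f (Icc a b) := by
  refine monotoneOn_of_hasDerivWithinAt_nonneg (f' := f') (convex_Icc a b) hc ?_ ?_ <;>
    rw [interior_Icc]
  · exact fun t ht => (hd t ht.1 ht.2).hasDerivWithinAt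
  · exact fun t ht => hn t ht.1 ht.2

lemma g_pos
    (hg : ∀ r : ℝ, 0 ≤ r → HasDerivWithinAt g (g' r) (Set.Ici 0) r)
    (hg' : ∀ r : ℝ, 0 ≤ r → HasDerivWithinAt g' (g'' r) (Set.Ici 0) r)
    (hODE : ∀ r : ℝ, 0 ≤ r → g'' r = (k r) ^ 2 * g r)
    (hg0 : g 0 = 0) (hg'0 : g' 0 = 1) {r : ℝ} (hr : 0 < r) : 0 < g r := by
  have cg := continuousOn_of_Ici hg
  have cg' := continuousOn_of_Ici hg'
  have h1 : MonotoneOn (fun t => g t * g' t) (Ici 0) := by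
    refine monotoneOn_Ici_of_deriv (cg.mul cg')
      (fun t ht => (hasDerivAt_of_Ici hg ht).mul (hasDerivAt_of_Ici hg' ht)) ?_
    intro t ht
    rw [hODE t ht.le]
    nlinarith [sq_nonneg (g' t), sq_nonneg (k t * g t)]
  have h2 : MonotoneOn (fun t => g t * g t) (Ici 0) := by
    refine monotoneOn_Ici_of_deriv (cg.mul cg)
      (fun t ht => (hasDerivAt_of_Ici hg ht).mul (hasDerivAt_of_Ici hg ht)) ?_
    intro t ht
    have := h1 (mem_Ici.2 le_rfl) (mem_Ici.2 ht.le) ht.le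
    simp only [hg0, zero_mul] at this
    linarith
  -- `g > 0` at some `s ∈ (0, r)`, because `g 0 = 0` and `g' 0 = 1`
  obtain ⟨s, hs0, hsr, hs⟩ : ∃ s, 0 < s ∧ s < r ∧ 0 < g s := by
    have h3 := (hasDerivWithinAt_iff_tendsto_slope.1 (hg 0 le_rfl))
    rw [hg'0, Ici_sdiff_left] at h3
    have h4 := h3.eventually (lt_mem_nhds (zero_lt_one))
    have h5 : ∀ᶠ s in nhdsWithin (0:ℝ) (Ioi 0), s ∈ Ioo 0 r := Ioo_mem_nhdsGT hr
    obtain ⟨s, hs1, hs2⟩ := (h4.and h5).exists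
    refine ⟨s, hs2.1, hs2.2, ?_⟩
    rw [slope_def_field, hg0, sub_zero, sub_zero] at hs1
    exact (div_pos_iff_of_pos_right hs2.1).1 hs1
  by_contra hneg
  push Not at hneg
  obtain ⟨t, ht, ht0⟩ := intermediate_value_Icc' hsr.le
    (cg.mono (fun x hx => mem_Ici.2 (hs0.le.trans hx.1))) (⟨hneg, hs.le⟩ : (0:ℝ) ∈ Icc (g r) (g s))
  have := h2 (mem_Ici.2 hs0.le) (mem_Ici.2 (hs0.le.trans ht.1)) ht.1
  simp only [ht0] at this
  nlinarith

lemma one_le_g'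
    (hg' : ∀ r : ℝ, 0 ≤ r → HasDerivWithinAt g' (g'' r) (Set.Ici 0) r)
    (hODE : ∀ r : ℝ, 0 ≤ r → g'' r = (k r) ^ 2 * g r)
    (hpos : ∀ r, 0 < r → 0 < g r) (hg'0 : g' 0 = 1) {r : ℝ} (hr : 0 ≤ r) : 1 ≤ g' r := by
  have h : MonotoneOn g' (Ici 0) := by
    refine monotoneOn_Ici_of_deriv (continuousOn_of_Ici hg')
      (fun t ht => hasDerivAt_of_Ici hg' ht) ?_
    intro t ht
    rw [hODE t ht.le]
    have := hpos t ht
    positivity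
  simpa [hg'0] using h (mem_Ici.2 le_rfl) (mem_Ici.2 hr) hr

lemma le_g
    (hg : ∀ r : ℝ, 0 ≤ r → HasDerivWithinAt g (g' r) (Set.Ici 0) r)
    (hg1 : ∀ r, 0 ≤ r → 1 ≤ g' r) (hg0 : g 0 = 0) {r : ℝ} (hr : 0 ≤ r) : r ≤ g r := by
  have h : MonotoneOn (fun t => g t - t) (Ici 0) := by
    refine monotoneOn_Ici_of_deriv ((continuousOn_of_Ici hg).sub continuousOn_id)
      (fun t ht => (hasDerivAt_of_Ici hg ht).sub (hasDerivAt_id t)) ?_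
    intro t ht
    linarith [hg1 t ht.le]
  have := h (mem_Ici.2 le_rfl) (mem_Ici.2 hr) hr
  simp only [hg0] at this
  linarith

/-- The energy estimate: the quantity `k(r)² g² - g'²`, with `r` frozen, is nondecreasing
on `[0, r]` and starts from `-1`. -/
lemma sq_g'_le
    (hk_pos : ∀ r : ℝ, 0 ≤ r → 0 < k r) (hk_mono : MonotoneOn k (Set.Ici 0))
    (hg : ∀ r : ℝ, 0 ≤ r → HasDerivWithinAt g (g' r) (Set.Ici 0) r)
    (hg' : ∀ r : ℝ, 0 ≤ r → HasDerivWithinAt g' (g'' r) (Set.Ici 0) r)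
    (hODE : ∀ r : ℝ, 0 ≤ r → g'' r = (k r) ^ 2 * g r)
    (hpos : ∀ r, 0 < r → 0 < g r) (hg1 : ∀ r, 0 ≤ r → 1 ≤ g' r)
    (hg0 : g 0 = 0) (hg'0 : g' 0 = 1) {r : ℝ} (hr : 0 ≤ r) :
    g' r ^ 2 ≤ k r ^ 2 * g r ^ 2 + 1 := by
  have cg := (continuousOn_of_Ici hg).mono (Icc_subset_Ici_self : Icc 0 r ⊆ Ici 0)
  have cg' := (continuousOn_of_Ici hg').mono (Icc_subset_Ici_self : Icc 0 r ⊆ Ici 0)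
  have h : MonotoneOn (fun t => k r ^ 2 * (g t * g t) - g' t * g' t) (Icc 0 r) := by
    refine monotoneOn_Icc_of_deriv ((continuousOn_const.mul (cg.mul cg)).sub (cg'.mul cg'))
      (fun t ht _ => (((hasDerivAt_of_Ici hg ht).mul (hasDerivAt_of_Ici hg ht)).const_mul _).sub
        ((hasDerivAt_of_Ici hg' ht).mul (hasDerivAt_of_Ici hg' ht))) ?_
    intro t ht htr
    rw [hODE t ht.le]
    have h1 : k t ^ 2 ≤ k r ^ 2 :=
      pow_le_pow_left₀ (hk_pos t ht.le).le (hk_mono (mem_Ici.2 ht.le) (mem_Ici.2 hr) htr.le) 2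
    have h2 : 0 ≤ g t * g' t := mul_nonneg (hpos t ht).le (by linarith [hg1 t ht.le])
    nlinarith [mul_nonneg h2 (sub_nonneg.2 h1)]
  have := h (left_mem_Icc.2 hr) (right_mem_Icc.2 hr) hr
  simp only [hg0, hg'0] at this
  nlinarith

lemma primitive_facts (m : ℝ) (hm : 1 ≤ m) (cg : ContinuousOn g (Ici 0))
    (hpos : ∀ r, 0 < r → 0 < g r) :
    (∀ r, 0 < r → HasDerivAt (fun r => ∫ t in (0:ℝ)..r, g t ^ m) (g r ^ m) r) ∧
    (∀ r, 0 < r → 0 < ∫ t in (0:ℝ)..r, g t ^ m) := by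
  -- extend `g ^ m` to a globally continuous function
  let G : ℝ → ℝ := fun t => g (max t 0) ^ m
  have hG : Continuous G := by
    refine Continuous.rpow_const ?_ (fun _ => Or.inr (by linarith))
    exact cg.comp_continuous (by fun_prop) (fun t => mem_Ici.2 (le_max_right t 0))
  have hGg : ∀ t, 0 ≤ t → G t = g t ^ m := fun t ht => by simp only [G, max_eq_left ht]
  have hJ : ∀ r, HasDerivAt (fun r => ∫ t in (0:ℝ)..r, G t) (G r) r := fun r =>
    integral_hasDerivAt_right (hG.intervalIntegrable _ _)
      (hG.stronglyMeasurableAtFilter _ _) hG.continuousAt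
  have hIJ : ∀ r, 0 ≤ r → (∫ t in (0:ℝ)..r, g t ^ m) = ∫ t in (0:ℝ)..r, G t := by
    intro r hr
    refine integral_congr (fun t ht => ?_)
    rw [uIcc_of_le hr] at ht
    exact (hGg t ht.1).symm
  refine ⟨?_, ?_⟩
  · intro r hr
    rw [← hGg r hr.le]
    refine (hJ r).congr_of_eventuallyEq ?_
    filter_upwards [Ici_mem_nhds hr] with t ht using hIJ t ht
  · intro r hr
    rw [hIJ r hr.le]
    refine intervalIntegral_pos_of_pos_on (hG.intervalIntegrable _ _) (fun t ht => ?_) hr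
    rw [hGg t ht.1.le]
    exact Real.rpow_pos_of_pos (hpos t ht.1) m

/-- The blow-up argument: `k I / g ^ m > 3` cannot hold on a whole half-line when `I' = g ^ m`.
The constant `3` makes `k² / w ≥ 9 v² / w` absorb the negative term `-2 v` of `L'`. -/
lemma frequently_le_three {m : ℝ} (hm : 1 ≤ m) {I : ℝ → ℝ}
    (hg : ∀ r, 0 < r → HasDerivAt g (g' r) r)
    (hg' : ∀ r, 0 < r → HasDerivAt g' (k r ^ 2 * g r) r)
    (hI : ∀ r, 0 < r → HasDerivAt I (g r ^ m) r)
    (hpos : ∀ r, 0 < r → 0 < g r) (hg1 : ∀ r, 0 < r → 0 < g' r)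
    (hIpos : ∀ r, 0 < r → 0 < I r) :
    ∃ᶠ r in atTop, k r * I r / g r ^ m ≤ 3 := by
  by_contra hcon
  rw [not_frequently] at hcon
  obtain ⟨R, hR⟩ := ((eventually_gt_atTop (0:ℝ)).and hcon).exists_forall_of_atTop
  -- `L = log (w v²)` with `w = g' / g`, `v = g ^ m / I`
  let L : ℝ → ℝ := fun t => Real.log (g' t) + (2 * m - 1) * Real.log (g t) - 2 * Real.log (I t)
  let L' : ℝ → ℝ := fun t => k t ^ 2 * g t / g' t + (2 * m - 1) * (g' t / g t)
    - 2 * (g t ^ m / I t)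
  have hL : ∀ t, 0 < t → HasDerivAt L (L' t) t := fun t ht =>
    (((hg' t ht).log (hg1 t ht).ne').add (((hg t ht).log (hpos t ht).ne').const_mul _)).sub
      (((hI t ht).log (hIpos t ht).ne').const_mul _)
  have hy : ∀ t, 0 < t → HasDerivAt (fun t => -Real.exp (-(L t) / 3) - t / 6)
      (-(Real.exp (-(L t) / 3) * (-(L' t) / 3)) - 1 / 6) t := fun t ht =>
    (((hL t ht).neg.div_const 3).exp.neg).sub ((hasDerivAt_id t).div_const 6)
  have hmono : MonotoneOn (fun t => -Real.exp (-(L t) / 3) - t / 6) (Ici R) := by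
    refine monotoneOn_Ici_of_deriv
      (fun t ht => (hy t (hR t ht).1).continuousAt.continuousWithinAt)
      (fun t ht => hy t (hR t ht.le).1) ?_
    intro t ht
    obtain ⟨ht0, hF⟩ := hR t ht.le
    have g0 := hpos t ht0
    have g1 := hg1 t ht0
    have I0 := hIpos t ht0
    have h0 : 0 < g t ^ m := Real.rpow_pos_of_pos g0 m
    set w := g' t / g t with hw
    set v := g t ^ m / I t with hv
    have w0 : 0 < w := div_pos g1 g0
    have v0 : 0 < v := div_pos h0 I0
    have hkv : 3 * v ≤ k t := by
      push Not at hF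
      rw [lt_div_iff₀ h0] at hF
      rw [hv, ← mul_div_assoc, div_le_iff₀ I0]
      exact hF.le
    have hL'e : L' t = k t ^ 2 / w + (2 * m - 1) * w - 2 * v := by
      simp only [L', hw, hv]
      rw [div_div_eq_mul_div]
    have hL'ge : (w + 2 * v) / 2 ≤ L' t := by
      have e1 : (3 * v) ^ 2 / w ≤ k t ^ 2 / w := by gcongr
      have e2 : w ≤ (2 * m - 1) * w := by nlinarith
      have e3 : 3 * v - w / 2 ≤ (3 * v) ^ 2 / w := by
        rw [le_div_iff₀ w0]
        nlinarith [sq_nonneg (3 * v - w / 2), sq_nonneg v, sq_nonneg w]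
      rw [hL'e]
      linarith
    have hLlog : L t = Real.log w + 2 * Real.log v := by
      simp only [L, hw, hv]
      rw [Real.log_div g1.ne' g0.ne', Real.log_div h0.ne' I0.ne', Real.log_rpow g0]
      ring
    have s0 : 0 < w + 2 * v := by positivity
    have hexp : (w + 2 * v)⁻¹ ≤ Real.exp (-(L t) / 3) := by
      have l1 : Real.log w ≤ Real.log (w + 2 * v) := Real.log_le_log w0 (by linarith)
      have l2 : Real.log v ≤ Real.log (w + 2 * v) := Real.log_le_log v0 (by linarith)
      rw [← Real.exp_log (inv_pos.2 s0), Real.log_inv]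
      apply Real.exp_le_exp.2
      rw [hLlog]
      linarith
    have : 1 / 2 ≤ Real.exp (-(L t) / 3) * L' t := by
      calc (1:ℝ) / 2 = (w + 2 * v)⁻¹ * ((w + 2 * v) / 2) := by field_simp
        _ ≤ _ := by gcongr
    linarith
  set E := Real.exp (-(L R) / 3) with hE
  have E0 : 0 < E := Real.exp_pos _
  have := hmono (mem_Ici.2 le_rfl) (mem_Ici.2 (by linarith : R ≤ R + 6 * E)) (by linarith)
  simp only [← hE] at this
  linarith [Real.exp_pos (-(L (R + 6 * E)) / 3)]

end

end LiminfBound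

open LiminfBound in
/-- Let `m ≥ 1` be a real number, `k : [0,∞) → (0,∞)` continuous,
nondecreasing, `k(r) → +∞`, and let `g ∈ C²([0,∞))` solve `g'' = k² g`, `g(0)=0`,
`g'(0)=1`.  Then `liminf_{r→∞} k(r) (∫₀^r g^m) / g(r)^m ≥ 1/m`. -/
theorem stmt2
    (m : ℝ) (hm : 1 ≤ m)
    (k : ℝ → ℝ)
    (hk_cont : ContinuousOn k (Set.Ici 0))
    (hk_pos : ∀ r : ℝ, 0 ≤ r → 0 < k r)
    (hk_mono : MonotoneOn k (Set.Ici 0))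
    (hk_infty : Filter.Tendsto k Filter.atTop Filter.atTop)
    (g g' g'' : ℝ → ℝ)
    (hg_deriv : ∀ r : ℝ, 0 ≤ r → HasDerivWithinAt g (g' r) (Set.Ici 0) r)
    (hg'_deriv : ∀ r : ℝ, 0 ≤ r → HasDerivWithinAt g' (g'' r) (Set.Ici 0) r)
    (hg''_cont : ContinuousOn g'' (Set.Ici 0))
    (hODE : ∀ r : ℝ, 0 ≤ r → g'' r = (k r) ^ 2 * g r)
    (hg0 : g 0 = 0) (hg'0 : g' 0 = 1) :
    1 / m ≤
      Filter.liminf (fun r : ℝ => k r * (∫ t in (0:ℝ)..r, g t ^ m) / g r ^ m)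
        Filter.atTop := by
  have m0 : 0 < m := by linarith
  have hpos : ∀ r, 0 < r → 0 < g r := fun r hr => g_pos hg_deriv hg'_deriv hODE hg0 hg'0 hr
  have hg1 : ∀ r, 0 ≤ r → 1 ≤ g' r := fun r hr => one_le_g' hg'_deriv hODE hpos hg'0 hr
  have hle : ∀ r, 0 ≤ r → r ≤ g r := fun r hr => le_g hg_deriv hg1 hg0 hr
  have cg := continuousOn_of_Ici hg_deriv
  obtain ⟨dI, pI⟩ := primitive_facts m hm cg hpos
  set I : ℝ → ℝ := fun r => ∫ t in (0:ℝ)..r, g t ^ m with hIdef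
  have hfreq : ∃ᶠ r in atTop, k r * I r / g r ^ m ≤ 3 :=
    frequently_le_three hm (fun r hr => hasDerivAt_of_Ici hg_deriv hr)
      (fun r hr => hODE r hr.le ▸ hasDerivAt_of_Ici hg'_deriv hr) dI hpos
      (fun r hr => by linarith [hg1 r hr.le]) pI
  have hcob : IsCoboundedUnder (· ≥ ·) atTop (fun r => k r * I r / g r ^ m) :=
    IsCoboundedUnder.of_frequently_le hfreq
  have htop : Tendsto (fun r => g r) atTop atTop :=
    tendsto_atTop_mono' _ ((eventually_ge_atTop 0).mono hle) tendsto_id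
  have key : ∀ c : ℝ, 1 < c → 1 / (m * c ^ 2) ≤ liminf (fun r => k r * I r / g r ^ m) atTop := by
    intro c hc
    refine le_liminf_of_le hcob ?_
    have hev : ∀ᶠ r in atTop, 0 < r ∧ g' r ≤ c * k r * g r := by
      filter_upwards [eventually_gt_atTop 0,
        (hk_infty.atTop_mul_atTop₀ htop).eventually_ge_atTop (1 / (c - 1))] with r hr hkg
      refine ⟨hr, ?_⟩
      have hsq := sq_g'_le hk_pos hk_mono hg_deriv hg'_deriv hODE hpos hg1 hg0 hg'0 hr.le
      have hp : 0 < k r * g r := mul_pos (hk_pos r hr.le) (hpos r hr)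
      rw [div_le_iff₀ (by linarith)] at hkg
      have h1 : g' r ≤ k r * g r + 1 :=
        (pow_le_pow_iff_left₀ (by linarith [hg1 r hr.le]) (by linarith) two_ne_zero).1 (by nlinarith)
      linarith
    obtain ⟨R, hR⟩ := hev.exists_forall_of_atTop
    have R0 : 0 < R := (hR R le_rfl).1
    have htm : Tendsto (fun r => g r ^ m) atTop atTop := (tendsto_rpow_atTop m0).comp htop
    filter_upwards [eventually_ge_atTop R,
      htm.eventually_ge_atTop (g R ^ m * c / (c - 1))] with r hr hbig
    have r0 : 0 < r := R0.trans_le hr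
    have h0 : 0 < g r ^ m := Real.rpow_pos_of_pos (hpos r r0) m
    have hmon : MonotoneOn (fun t => m * c * k r * I t - g t ^ m) (Icc R r) := by
      have dh : ∀ t, 0 < t → HasDerivAt (fun t => m * c * k r * I t - g t ^ m)
          (m * c * k r * g t ^ m - g' t * m * g t ^ (m - 1)) t := fun t ht =>
        ((dI t ht).const_mul _).sub
          ((hasDerivAt_of_Ici hg_deriv ht).rpow_const (Or.inl (hpos t ht).ne'))
      refine monotoneOn_Icc_of_deriv
        (fun t ht => (dh t (R0.trans_le ht.1)).continuousAt.continuousWithinAt)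
        (fun t ht _ => dh t (R0.trans ht)) ?_
      intro t ht htr
      have t0 : 0 < t := R0.trans ht
      have gt0 := hpos t t0
      have hp : 0 < g t ^ (m - 1) := Real.rpow_pos_of_pos gt0 _
      have hkk : k t ≤ k r := hk_mono (mem_Ici.2 t0.le) (mem_Ici.2 r0.le) htr.le
      have h1 : g' t ≤ c * k r * g t := (hR t ht.le).2.trans (by gcongr)
      have h2 : g t ^ m = g t ^ (m - 1) * g t := by
        rw [← Real.rpow_add_one gt0.ne']; congr 1; ring
      rw [h2]
      nlinarith [mul_nonneg (mul_nonneg m0.le hp.le) (sub_nonneg.2 h1)]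
    have hfin := hmon (left_mem_Icc.2 hr) (right_mem_Icc.2 hr) hr
    simp only at hfin
    have hIR : 0 ≤ m * c * k r * I R := by
      have := pI R R0
      have := hk_pos r r0.le
      positivity
    rw [div_le_iff₀ (by linarith)] at hbig
    rw [div_le_div_iff₀ (by positivity) h0]
    nlinarith
  have hlim : Tendsto (fun c : ℝ => 1 / (m * c ^ 2)) (nhdsWithin 1 (Ioi 1))
      (nhds (1 / (m * 1 ^ 2))) := by
    have : ContinuousAt (fun c : ℝ => 1 / (m * c ^ 2)) 1 := by
      refine continuousAt_const.div (by fun_prop) (by simpa using m0.ne')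
    exact this.tendsto.mono_left nhdsWithin_le_nhds
  rw [one_pow, mul_one] at hlim
  refine le_of_tendsto hlim ?_
  filter_upwards [self_mem_nhdsWithin] with c hc using key c hc
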